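/- There exists a (48,10)-separable permutation code of length 48 and minimum distance 47; that is, there is a subset C of the symmetric group on Fin 48 of cardinality 10·48 = 480 which is the disjoint union of 10 sets L₁,…,L₁₀, each of cardinality 48, such that any two distinct permutations in the same L_i are at Hamming distance 48, and any two permutations in different blocks L_i, L_j are at Hamming distance 47. -/

import Mathlib

/-- Hamming distance between two permutations of `Fin n`:
the number of points where they differ. -/
def permHammingDist {n : ℕ} (σ τ : Equiv.Perm (Fin n)) : ℕ :=
  (Finset.univ.filter fun x => σ x ≠ τ x).card

/-! Call maps `f, g : G → G` on a group orthogonal if `-g + f` is bijective. The translates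
`f + a` of one permutation `f` of `G` pairwise differ everywhere, and for orthogonal permutations
`f` and `g` the translates `f + a` and `g + b` agree exactly where `-g + f` takes the value
`b - a`, that is, at one point. Hence `m` pairwise orthogonal permutations of a group of order `n`
generate an `(n, m)`-separable permutation code.

For `n = 48` take `G = ℤ/3 × 𝔽₄ × 𝔽₄` and the affine permutation `β : x ↦ (1, 0, 0) + ω x`, where
`ω ∈ 𝔽₄` is a primitive cube root of unity acting on the last two coordinates. Conjugation by `β`
preserves orthogonality and fixes the identity, and the ten permutations are the identity and the
conjugates of three starters under `1, β, β²`. Each starter has the form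
`f (q, v) = b q + M v` with `M` additive on the last factor, so that coincidences of values of
`-g + f` need only be excluded between points `(q, 0)` and `y`.
-/

open Equiv Function

section HammingDistance

variable {n : ℕ} {σ τ : Perm (Fin n)}

theorem permHammingDist_self (σ : Perm (Fin n)) : permHammingDist σ σ = 0 := by
  simp [permHammingDist]

theorem permHammingDist_eq_of_forall_ne (h : ∀ x, σ x ≠ τ x) : permHammingDist σ τ = n := by
  simp [permHammingDist, h]

theorem permHammingDist_eq_pred_of_existsUnique (h : ∃! x, σ x = τ x) :
    permHammingDist σ τ = n - 1 := by
  obtain ⟨a, ha, ha_unique⟩ := h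
  have hfilter : (Finset.univ.filter fun x => σ x ≠ τ x) = Finset.univ.erase a := by
    ext x
    have : σ x = τ x ↔ x = a := ⟨ha_unique x, fun hx => hx ▸ ha⟩
    simp [this]
  rw [permHammingDist, hfilter, Finset.card_erase_of_mem (Finset.mem_univ a), Finset.card_fin]

end HammingDistance

/-- The blocks `L i` form an `(r, |ι|)`-separable permutation code of length `n`. -/
structure IsSeparablePA {ι : Type*} {n : ℕ} (r : ℕ) (L : ι → Finset (Perm (Fin n))) : Prop where
  card_block : ∀ i, (L i).card = r
  disjoint : ∀ i j, i ≠ j → Disjoint (L i) (L j)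
  dist_same_block : ∀ i, ∀ σ ∈ L i, ∀ τ ∈ L i, σ ≠ τ → permHammingDist σ τ = n
  dist_distinct_blocks :
    ∀ i j, i ≠ j → ∀ σ ∈ L i, ∀ τ ∈ L j, permHammingDist σ τ = n - 1

theorem IsSeparablePA.card_biUnion {ι : Type*} [Fintype ι] {n r : ℕ}
    {L : ι → Finset (Perm (Fin n))} (hL : IsSeparablePA r L) :
    (Finset.univ.biUnion L).card = Fintype.card ι * r := by
  rw [Finset.card_biUnion fun i _ j _ hij => hL.disjoint i j hij]
  simp [hL.card_block]

section Orthogonality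

variable {X G : Type*} [AddGroup G]

/-- Orthogonality of maps into a group, written additively: the condition on two rows of a
difference matrix. -/
def IsOrthogonal (f g : X → G) : Prop :=
  Bijective fun x => -g x + f x

theorem IsOrthogonal.symm {f g : X → G} (h : IsOrthogonal f g) : IsOrthogonal g f := by
  have hneg : (fun x => -f x + g x) = Neg.neg ∘ fun x => -g x + f x := by
    ext x
    simp
  rw [IsOrthogonal, hneg]
  exact neg_involutive.bijective.comp h

/-- The affine permutation `x ↦ c + α x`. -/
def affinePerm (α : G ≃+ G) (c : G) : Perm G :=
  α.toEquiv.trans (Equiv.addLeft c)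

theorem IsOrthogonal.conj_affinePerm {f g : G → G} (h : IsOrthogonal f g) (α : G ≃+ G) (c : G) :
    IsOrthogonal ((affinePerm α c).conj f) ((affinePerm α c).conj g) := by
  have hconj : (fun x => -(affinePerm α c).conj g x + (affinePerm α c).conj f x) =
      α ∘ (fun x => -g x + f x) ∘ (affinePerm α c).symm := by
    ext x
    simp [affinePerm, Equiv.conj_apply, add_assoc]
  rw [IsOrthogonal, hconj]
  exact α.bijective.comp (h.comp (Equiv.bijective _))

end Orthogonality

section Code

variable {ι G : Type*} [AddGroup G] {n : ℕ} (e : G ≃ Fin n)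

/-- The permutation `x ↦ f x + a` of `G`, transported to `Fin n`. -/
def codeword (f : Perm G) (a : G) : Perm (Fin n) :=
  e.permCongr (f.trans (Equiv.addRight a))

theorem codeword_apply_eq_iff (f g : Perm G) (a b : G) (x : G) :
    codeword e f a (e x) = codeword e g b (e x) ↔ -g x + f x = b - a := by
  simp [codeword, eq_sub_iff_add_eq, add_assoc, neg_add_eq_iff_eq_add]

theorem permHammingDist_codeword_of_ne (f : Perm G) {a b : G} (hab : a ≠ b) :
    permHammingDist (codeword e f a) (codeword e f b) = n :=
  permHammingDist_eq_of_forall_ne <| e.forall_congr_right.1 fun x => by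
    rw [Ne, codeword_apply_eq_iff, neg_add_cancel, eq_comm, sub_eq_zero]
    exact hab.symm

theorem permHammingDist_codeword_of_isOrthogonal {f g : Perm G} (hfg : IsOrthogonal f g)
    (a b : G) : permHammingDist (codeword e f a) (codeword e g b) = n - 1 :=
  permHammingDist_eq_pred_of_existsUnique <| e.existsUnique_congr_right.1 <| by
    simpa only [codeword_apply_eq_iff] using hfg.existsUnique (b - a)

theorem codeword_injective (f : Perm G) : Injective (codeword e f) := by
  intro a b hab
  have h := (codeword_apply_eq_iff e f f a b 0).1 (by rw [hab])
  rwa [neg_add_cancel, eq_comm, sub_eq_zero, eq_comm] at h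

theorem isSeparablePA_image_codeword [Fintype G] [Nontrivial G] {f : ι → Perm G}
    (hf : Pairwise fun i j => IsOrthogonal (f i) (f j)) :
    IsSeparablePA n fun i => Finset.univ.image (codeword e (f i)) := by
  have hcard : Fintype.card G = n := by simpa using Fintype.card_congr e
  have hn : n - 1 ≠ 0 := Nat.sub_ne_zero_of_lt (hcard ▸ Fintype.one_lt_card)
  have hdist : ∀ i j, i ≠ j → ∀ σ ∈ Finset.univ.image (codeword e (f i)),
      ∀ τ ∈ Finset.univ.image (codeword e (f j)), permHammingDist σ τ = n - 1 := by
    simp only [Finset.forall_mem_image]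
    exact fun i j hij a _ b _ => permHammingDist_codeword_of_isOrthogonal e (hf hij) a b
  refine ⟨fun i => ?_, fun i j hij => Finset.disjoint_left.2 fun σ hi hj => hn ?_, fun i => ?_,
    hdist⟩
  · rw [Finset.card_image_of_injective _ (codeword_injective e (f i)), Finset.card_univ, hcard]
  · rw [← hdist i j hij σ hi σ hj, permHammingDist_self]
  · simp only [Finset.forall_mem_image]
    exact fun a _ b _ hab => permHammingDist_codeword_of_ne e (f i) (ne_of_apply_ne _ hab)

end Code

section Iterate

variable {X ι : Type*} {r : X → X → Prop} {T : X → X}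

theorem rel_iterate (hT : ∀ x y, r x y → r (T x) (T y)) :
    ∀ (k : ℕ) {x y : X}, r x y → r (T^[k] x) (T^[k] y)
  | 0, _, _, h => h
  | k + 1, x, y, h => rel_iterate hT k (hT x y h)

theorem pairwise_rel_iterate (hr : ∀ x y, r x y → r y x) (hT : ∀ x y, r x y → r (T x) (T y))
    {m : ℕ} {s : ι → X} (hs : ∀ i j (d : Fin m), (i, 0) ≠ (j, (d : ℕ)) → r (s i) (T^[d] (s j))) :
    Pairwise fun p q : ι × Fin m => r (T^[p.2] (s p.1)) (T^[q.2] (s q.1)) := by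
  have hle : ∀ (i j : ι) (k l : Fin m), k ≤ l → (i, k) ≠ (j, l) →
      r (T^[k] (s i)) (T^[l] (s j)) := by
    intro i j k l hkl hne
    obtain ⟨d, hd⟩ := Nat.exists_eq_add_of_le (Fin.le_def.1 hkl)
    rw [hd, iterate_add_apply]
    refine rel_iterate hT k (hs i j ⟨d, by lia⟩ fun h => hne ?_)
    grind
  rintro ⟨i, k⟩ ⟨j, l⟩ hne
  rcases le_total k l with hkl | hlk
  · exact hle i j k l hkl hne
  · exact hr _ _ (hle j i l k hlk hne.symm)

end Iterate

section Quasiperiodicity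

variable {Q V : Type*} [AddGroup Q] [AddGroup V]

/-- Translating the argument along `V` translates the values, so that one of two points with equal
values may be moved into `Q × {0}`. -/
def IsQuasiperiodic {G : Type*} [Add G] (f : Q × V → G) : Prop :=
  ∀ v, ∃ c, ∀ x, f (x + (0, v)) = f x + c

theorem IsQuasiperiodic.neg_add {G : Type*} [AddCommGroup G] {f g : Q × V → G}
    (hf : IsQuasiperiodic f) (hg : IsQuasiperiodic g) :
    IsQuasiperiodic fun x => -g x + f x := by
  intro v
  obtain ⟨c, hc⟩ := hf v
  obtain ⟨d, hd⟩ := hg v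
  refine ⟨-d + c, fun x => ?_⟩
  simp only [hc, hd]
  abel

theorem IsQuasiperiodic.conj_affinePerm {f : Q × V → Q × V} (hf : IsQuasiperiodic f)
    (α : Q ≃+ Q) (α' : V ≃+ V) (c : Q × V) :
    IsQuasiperiodic ((affinePerm (α.prodCongr α') c).conj f) := by
  intro v
  obtain ⟨d, hd⟩ := hf (α'.symm v)
  have hsymm : ∀ x, (affinePerm (α.prodCongr α') c).symm (x + (0, v)) =
      (affinePerm (α.prodCongr α') c).symm x + (0, α'.symm v) := fun x => by
    ext <;> simp [affinePerm, AddEquiv.prodCongr, add_assoc]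
  refine ⟨α.prodCongr α' d, fun x => ?_⟩
  rw [Equiv.conj_apply, hsymm, hd, Equiv.conj_apply]
  simp [affinePerm, add_assoc]

theorem IsQuasiperiodic.injective {G : Type*} [Add G] {f : Q × V → G} (hf : IsQuasiperiodic f)
    (h : ∀ q y, f (q, 0) = f y → (q, 0) = y) : Injective f := by
  rintro ⟨q, v⟩ y hy
  obtain ⟨c, hc⟩ := hf (-v)
  have htranslate : f (q, 0) = f (y + (0, -v)) := by
    rw [hc, ← hy, ← hc]
    simp
  simpa [Prod.ext_iff, eq_add_neg_iff_add_eq] using h q _ htranslate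

end Quasiperiodicity

/-- The additive group of the field `𝔽₄ = 𝔽₂(ω)`, with `(a, b)` standing for `a * ω + b`. -/
abbrev F₄ := ZMod 2 × ZMod 2

/-- Multiplication by `ω` on `𝔽₄`. -/
def mulω : F₄ ≃+ F₄ where
  toFun x := (x.1 + x.2, x.1)
  invFun x := (x.2, x.1 + x.2)
  left_inv := by decide
  right_inv := by decide
  map_add' := by decide

/-- The group `ℤ/3 × 𝔽₄ × 𝔽₄` of order 48, bracketed so that quasiperiodicity refers to the last
factor. -/
abbrev G48 := (ZMod 3 × F₄) × F₄

/-- The affine permutation `β : x ↦ (1, 0, 0) + ω x`, with `ω` acting trivially on `ℤ/3`. -/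
def twist : Perm G48 :=
  affinePerm (((AddEquiv.refl _).prodCongr mulω).prodCongr mulω) ((1, 0), 0)

/-- The element of `G48` given by the three decimal digits of a number; in the last two places the
digits `0, 1, 2, 3` stand for `0, 1, ω, ω²`. -/
def ofDigits (n : ℕ) : G48 :=
  (((n / 100 : ℕ), ofDigit (n / 10 % 10)), ofDigit (n % 10))
where
  /-- The element of `𝔽₄` with binary digits those of `d`. -/
  ofDigit (d : ℕ) : F₄ := ((d / 2 : ℕ), (d : ℕ))

/-- The values `b (h, t)` of the starters `(h, t, v) ↦ b (h, t) + M v`. -/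
def starterBase : Fin 3 → ZMod 3 → ZMod 2 → ZMod 2 → ℕ :=
  ![![![![000, 213], ![011, 133]], ![![022, 211], ![103, 210]], ![![131, 023], ![223, 120]]],
    ![![![000, 101], ![013, 201]], ![![213, 230], ![001, 111]], ![![222, 120], ![021, 103]]],
    ![![![000, 220], ![110, 210]], ![![002, 101], ![212, 123]], ![![202, 031], ![112, 033]]]]

/-- The values `M v` of the starters `(h, t, v) ↦ b (h, t) + M v`. -/
def starterSlope : Fin 3 → ZMod 2 → ZMod 2 → ℕ :=
  ![![![000, 010], ![031, 021]], ![![000, 022], ![011, 033]], ![![000, 021], ![001, 020]]]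

/-- The starters `(q, v) ↦ b q + M v`, whose conjugates under `1, β, β²` are nine of the ten
pairwise orthogonal permutations. -/
def starter (j : Fin 3) (x : G48) : G48 :=
  ofDigits (starterBase j x.1.1 x.1.2.1 x.1.2.2) + ofDigits (starterSlope j x.2.1 x.2.2)

theorem starterSlope_add (j : Fin 3) (v w : F₄) :
    ofDigits (starterSlope j (v + w).1 (v + w).2) =
      ofDigits (starterSlope j v.1 v.2) + ofDigits (starterSlope j w.1 w.2) := by
  revert j v w
  decide +kernel

theorem isQuasiperiodic_starter (j : Fin 3) : IsQuasiperiodic (starter j) := fun v =>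
  ⟨ofDigits (starterSlope j v.1 v.2), fun (q, w) => by
    rw [Prod.mk_add_mk, add_zero]
    simp only [starter, starterSlope_add, add_assoc]⟩

theorem isQuasiperiodic_conj_starter (j : Fin 3) (k : ℕ) :
    IsQuasiperiodic (twist.conj^[k] (starter j)) :=
  Iterate.rec _ (isQuasiperiodic_starter j) (fun _ hf => hf.conj_affinePerm _ _ _) k

theorem starter_bijective (j : Fin 3) : Bijective (starter j) := by
  refine Injective.bijective_of_finite <| (isQuasiperiodic_starter j).injective ?_
  revert j
  decide +kernel

theorem isOrthogonal_id_starter (j : Fin 3) : IsOrthogonal id (starter j) := by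
  have hid : IsQuasiperiodic (id : G48 → G48) := fun v => ⟨(0, v), fun _ => rfl⟩
  refine Injective.bijective_of_finite <|
    (hid.neg_add (isQuasiperiodic_starter j)).injective ?_
  revert j
  decide +kernel

theorem isOrthogonal_starter_conj_starter (i j k : Fin 3) (hne : (i, 0) ≠ (j, (k : ℕ))) :
    IsOrthogonal (starter i) (twist.conj^[k] (starter j)) := by
  refine Injective.bijective_of_finite <|
    ((isQuasiperiodic_starter i).neg_add (isQuasiperiodic_conj_starter j k)).injective ?_
  revert i j k
  decide +kernel

/-- The ten permutations of `G48`: the identity and the conjugates `βᵏ f β⁻ᵏ` of the starters. -/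
def row : Option (Fin 3 × Fin 3) → G48 → G48
  | none => id
  | some (j, k) => twist.conj^[k] (starter j)

theorem row_bijective : ∀ i, Bijective (row i)
  | none => bijective_id
  | some (j, k) => Iterate.rec Bijective (f := twist.conj) (starter_bijective j)
      (fun _ hf => twist.bijective.comp (hf.comp twist.symm.bijective)) k

theorem isOrthogonal_conj_twist (f g : G48 → G48) (h : IsOrthogonal f g) :
    IsOrthogonal (twist.conj f) (twist.conj g) :=
  h.conj_affinePerm _ _

theorem isOrthogonal_id_conj_starter (j k : Fin 3) :
    IsOrthogonal id (twist.conj^[k] (starter j)) := by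
  have hid : twist.conj id = id := by
    ext1 x
    simp [Equiv.conj_apply]
  rw [← iterate_fixed hid k]
  exact rel_iterate isOrthogonal_conj_twist k (isOrthogonal_id_starter j)

theorem pairwise_isOrthogonal_row : Pairwise fun i j => IsOrthogonal (row i) (row j)
  | none, none, hne => (hne rfl).elim
  | none, some (j, k), _ => isOrthogonal_id_conj_starter j k
  | some (j, k), none, _ => (isOrthogonal_id_conj_starter j k).symm
  | some _, some _, hne =>
    pairwise_rel_iterate (fun _ _ => IsOrthogonal.symm) isOrthogonal_conj_twist
      isOrthogonal_starter_conj_starter (ne_of_apply_ne some hne)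

/-- There exists a (48,10)-separable permutation code of length 48 and minimum
distance 47: a disjoint union of 10 blocks of 48 permutations each (so 480
codewords in total), with Hamming distance 48 between distinct permutations in
the same block and Hamming distance 47 between permutations in different blocks. -/
theorem separable_PA_48_10 :
    ∃ L : Fin 10 → Finset (Equiv.Perm (Fin 48)),
      (∀ i, (L i).card = 48) ∧
      (∀ i j, i ≠ j → Disjoint (L i) (L j)) ∧
      (Finset.univ.biUnion L).card = 480 ∧
      (∀ i, ∀ σ ∈ L i, ∀ τ ∈ L i, σ ≠ τ → permHammingDist σ τ = 48) ∧
      (∀ i j, i ≠ j → ∀ σ ∈ L i, ∀ τ ∈ L j, permHammingDist σ τ = 47) := by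
  let index : Fin 10 ≃ Option (Fin 3 × Fin 3) := (Fintype.equivFinOfCardEq (by simp)).symm
  let e : G48 ≃ Fin 48 := Fintype.equivFinOfCardEq (by simp [ZMod.card])
  have hL := isSeparablePA_image_codeword e (f := fun i => ofBijective _ (row_bijective (index i)))
    (pairwise_isOrthogonal_row.comp_of_injective index.injective)
  exact ⟨_, hL.card_block, hL.disjoint, hL.card_biUnion, hL.dist_same_block,
    hL.dist_distinct_blocks⟩
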